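/- arXiv:1807.07819 — 9 statements merged into one kernel-verified Lean document; each statement's English description precedes it below -/
import Mathlib

section
/- Suppose the block matrix [[Φ_Fᵀ Π Φ_F − Π + Fᵀ R_u F + R_x + λ C_Fᵀ C_F , Φ_Fᵀ Π B_p],[B_pᵀ Π Φ_F , B_pᵀ Π B_p − λ I]] is negative semidefinite, where Π is a symmetric positive definite n×n matrix, λ > 0, R_x ⪰ 0 and R_u ⪰ 0 are symmetric. Then for every x ∈ ℝⁿ and every p ∈ ℝ^q with ‖p‖₂² ≤ ‖C_F x‖₂², the one-step Lyapunov decrease (Φ_F x + B_p p)ᵀ Π (Φ_F x + B_p p) − xᵀ Π x ≤ − xᵀ (R_x + Fᵀ R_u F) x holds. -/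
open Matrix

/-!
This is the S-procedure with multiplier `lam`. Evaluating the matrix inequality at the stacked
vector `(x, p)` bounds the Lyapunov decrease plus the stage cost by
`lam * (‖p‖² - ‖CF x‖²)`, which is nonpositive for every admissible `p`.
-/

theorem dotProduct_transpose_mulVec_eq {k l : ℕ} (A : Matrix (Fin k) (Fin l) ℝ)
    (v : Fin l → ℝ) (w : Fin k → ℝ) : v ⬝ᵥ (Aᵀ *ᵥ w) = (A *ᵥ v) ⬝ᵥ w := by
  rw [dotProduct_mulVec, vecMul_transpose]

theorem stmt_0
    {n m q : ℕ}
    (Φ : Matrix (Fin n) (Fin n) ℝ) (G : Matrix (Fin n) (Fin m) ℝ)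
    (Bp : Matrix (Fin n) (Fin q) ℝ)
    (Cq : Matrix (Fin q) (Fin n) ℝ) (Dq : Matrix (Fin q) (Fin m) ℝ)
    (F : Matrix (Fin m) (Fin n) ℝ)
    (Pm : Matrix (Fin n) (Fin n) ℝ) (Rx : Matrix (Fin n) (Fin n) ℝ)
    (Ru : Matrix (Fin m) (Fin m) ℝ) (lam : ℝ)
    (hPm : Pm.PosDef) (hPms : Pm.IsSymm)
    (hlam : 0 < lam)
    (hRx : Rx.PosSemidef) (hRu : Ru.PosSemidef)
    (ΦF : Matrix (Fin n) (Fin n) ℝ) (hΦF : ΦF = Φ + G * F)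
    (CF : Matrix (Fin q) (Fin n) ℝ) (hCF : CF = Cq + Dq * F)
    (hLMI : (-(Matrix.fromBlocks
        (ΦFᵀ * Pm * ΦF - Pm + Fᵀ * Ru * F + Rx + lam • (CFᵀ * CF))
        (ΦFᵀ * Pm * Bp)
        (Bpᵀ * Pm * ΦF)
        (Bpᵀ * Pm * Bp - lam • (1 : Matrix (Fin q) (Fin q) ℝ)))).PosSemidef) :
    ∀ (x : Fin n → ℝ) (p : Fin q → ℝ),
      p ⬝ᵥ p ≤ (CF *ᵥ x) ⬝ᵥ (CF *ᵥ x) →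
      (ΦF *ᵥ x + Bp *ᵥ p) ⬝ᵥ (Pm *ᵥ (ΦF *ᵥ x + Bp *ᵥ p)) - x ⬝ᵥ (Pm *ᵥ x)
        ≤ -(x ⬝ᵥ ((Rx + Fᵀ * Ru * F) *ᵥ x)) := by
  intro x p hp
  have h := hLMI.dotProduct_mulVec_nonneg (Sum.elim x p)
  have hmul := mul_le_mul_of_nonneg_left hp hlam.le
  simp only [star_trivial, neg_mulVec, dotProduct_neg, fromBlocks_mulVec, Sum.elim_comp_inl,
    Sum.elim_comp_inr, sumElim_dotProduct_sumElim, add_mulVec, sub_mulVec, smul_mulVec,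
    one_mulVec, ← mulVec_mulVec, dotProduct_add, dotProduct_sub, dotProduct_smul, smul_eq_mul,
    dotProduct_transpose_mulVec_eq] at h
  simp only [add_mulVec, mulVec_add, dotProduct_add, add_dotProduct, ← mulVec_mulVec,
    dotProduct_transpose_mulVec_eq]
  linarith
end

section
/- Suppose the block matrix [[Φ_Fᵀ Π Φ_F − Π + Fᵀ R_u F + R_x + λ C_Fᵀ C_F , Φ_Fᵀ Π B_p],[B_pᵀ Π Φ_F , B_pᵀ Π B_p − λ I]] is negative semidefinite, where Π ≻ 0 is symmetric, λ > 0, R_x ⪰ 0 and R_u ⪰ 0 are symmetric. Then for every ξ > 0 the ellipsoid C(Π,ξ) := {x ∈ ℝⁿ : xᵀ Π x ≤ ξ} is robustly positively invariant for the closed loop: for every x with xᵀ Π x ≤ ξ and every p ∈ ℝ^q with ‖p‖₂² ≤ ‖C_F x‖₂², one has (Φ_F x + B_p p)ᵀ Π (Φ_F x + B_p p) ≤ ξ. -/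
open Matrix

/-!
The proof is the S-procedure. Write `x⁺ = ΦF x + Bp p` and `V(x) = xᵀ Pm x`. Evaluating the quadratic
form of the LMI at the stacked vector `(x, p)` gives

  `V(x⁺) - V(x) + (F x)ᵀ Ru (F x) + xᵀ Rx x + lam * (‖CF x‖² - ‖p‖²) ≤ 0`.

The two stage costs are nonnegative, and so is the last term when `p` is admissible. Hence
`V(x⁺) ≤ V(x)`, and every sublevel set of `V` is robustly invariant.
-/

/-- The bilinear form of a congruence `Aᵀ * P * B`, which turns each block of the LMI into a form in
the closed-loop vectors. -/
lemma dotProduct_congr_mulVec {a b c d : ℕ} (A : Matrix (Fin a) (Fin b) ℝ)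
    (P : Matrix (Fin a) (Fin c) ℝ) (B : Matrix (Fin c) (Fin d) ℝ)
    (u : Fin b → ℝ) (v : Fin d → ℝ) :
    u ⬝ᵥ ((Aᵀ * P * B) *ᵥ v) = (A *ᵥ u) ⬝ᵥ (P *ᵥ (B *ᵥ v)) := by
  rw [Matrix.mul_assoc, ← Matrix.mulVec_mulVec, ← Matrix.mulVec_mulVec, Matrix.dotProduct_mulVec,
    Matrix.vecMul_transpose]

theorem stmt_1
    {n m q : ℕ}
    (Φ : Matrix (Fin n) (Fin n) ℝ) (G : Matrix (Fin n) (Fin m) ℝ)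
    (Bp : Matrix (Fin n) (Fin q) ℝ)
    (Cq : Matrix (Fin q) (Fin n) ℝ) (Dq : Matrix (Fin q) (Fin m) ℝ)
    (F : Matrix (Fin m) (Fin n) ℝ)
    (Pm : Matrix (Fin n) (Fin n) ℝ) (Rx : Matrix (Fin n) (Fin n) ℝ)
    (Ru : Matrix (Fin m) (Fin m) ℝ) (lam : ℝ)
    (hPm : Pm.PosDef) (hPms : Pm.IsSymm)
    (hlam : 0 < lam)
    (hRx : Rx.PosSemidef) (hRu : Ru.PosSemidef)
    (ΦF : Matrix (Fin n) (Fin n) ℝ) (hΦF : ΦF = Φ + G * F)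
    (CF : Matrix (Fin q) (Fin n) ℝ) (hCF : CF = Cq + Dq * F)
    (hLMI : (-(Matrix.fromBlocks
        (ΦFᵀ * Pm * ΦF - Pm + Fᵀ * Ru * F + Rx + lam • (CFᵀ * CF))
        (ΦFᵀ * Pm * Bp)
        (Bpᵀ * Pm * ΦF)
        (Bpᵀ * Pm * Bp - lam • (1 : Matrix (Fin q) (Fin q) ℝ)))).PosSemidef) :
    ∀ ξ : ℝ, 0 < ξ →
      ∀ (x : Fin n → ℝ) (p : Fin q → ℝ),
        x ⬝ᵥ (Pm *ᵥ x) ≤ ξ →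
        p ⬝ᵥ p ≤ (CF *ᵥ x) ⬝ᵥ (CF *ᵥ x) →
        (ΦF *ᵥ x + Bp *ᵥ p) ⬝ᵥ (Pm *ᵥ (ΦF *ᵥ x + Bp *ᵥ p)) ≤ ξ := by
  intro ξ _ x p hx hp
  have hV := hLMI.dotProduct_mulVec_nonneg (Sum.elim x p)
  have hX := hRx.dotProduct_mulVec_nonneg x
  have hU := hRu.dotProduct_mulVec_nonneg (F *ᵥ x)
  have hC : x ⬝ᵥ ((CFᵀ * CF) *ᵥ x) = (CF *ᵥ x) ⬝ᵥ (CF *ᵥ x) := by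
    simpa using dotProduct_congr_mulVec CF 1 CF x x
  simp only [star_trivial, Matrix.neg_mulVec, Matrix.fromBlocks_mulVec, dotProduct_neg,
    sumElim_dotProduct_sumElim, Sum.elim_comp_inl, Sum.elim_comp_inr, Matrix.add_mulVec,
    Matrix.sub_mulVec, dotProduct_add, dotProduct_sub, Matrix.smul_mulVec, dotProduct_smul,
    dotProduct_congr_mulVec, hC, Matrix.one_mulVec, smul_eq_mul] at hV hX hU
  simp only [Matrix.mulVec_add, dotProduct_add, add_dotProduct]
  have hS := mul_le_mul_of_nonneg_left hp hlam.le
  linarith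
end

section
/- Suppose the block matrix [[Φ_Fᵀ Π Φ_F − Π + Fᵀ R_u F + R_x + λ C_Fᵀ C_F , Φ_Fᵀ Π B_p],[B_pᵀ Π Φ_F , B_pᵀ Π B_p − λ I]] is negative semidefinite, where Π ≻ 0 is symmetric, λ > 0, R_x ⪰ 0 and R_u ⪰ 0 are symmetric. Then for every pair of sequences x : ℕ → ℝⁿ and p : ℕ → ℝ^q satisfying x(t+1) = Φ_F x(t) + B_p p(t) and ‖p(t)‖₂² ≤ ‖C_F x(t)‖₂² for all t, every partial sum satisfies Σ_{t=0}^{T} ( x(t)ᵀ R_x x(t) + (F x(t))ᵀ R_u (F x(t)) ) ≤ x(0)ᵀ Π x(0); in particular the infinite-horizon quadratic cost is bounded above by x(0)ᵀ Π x(0). -/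
/-!
The function `V v = vᵀ Π v` is a Lyapunov function for the cost. Evaluating the matrix inequality
at the stacked vector `(x t, p t)` gives
`V (x (t+1)) - V (x t) + cost t + λ (‖C_F x t‖² - ‖p t‖²) ≤ 0`, and the bracket is nonnegative for
an admissible uncertainty, so the stage cost is at most the decrease of `V`. The stage costs
telescope, and `V ≥ 0` at the final time discards the last term.
-/

open Matrix

theorem stmt_2
    {n m q : ℕ}
    (Φ : Matrix (Fin n) (Fin n) ℝ) (G : Matrix (Fin n) (Fin m) ℝ)
    (Bp : Matrix (Fin n) (Fin q) ℝ)
    (Cq : Matrix (Fin q) (Fin n) ℝ) (Dq : Matrix (Fin q) (Fin m) ℝ)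
    (F : Matrix (Fin m) (Fin n) ℝ)
    (Pm : Matrix (Fin n) (Fin n) ℝ) (Rx : Matrix (Fin n) (Fin n) ℝ)
    (Ru : Matrix (Fin m) (Fin m) ℝ) (lam : ℝ)
    (hPm : Pm.PosDef) (hPms : Pm.IsSymm)
    (hlam : 0 < lam)
    (hRx : Rx.PosSemidef) (hRu : Ru.PosSemidef)
    (ΦF : Matrix (Fin n) (Fin n) ℝ) (hΦF : ΦF = Φ + G * F)
    (CF : Matrix (Fin q) (Fin n) ℝ) (hCF : CF = Cq + Dq * F)
    (hLMI : (-(Matrix.fromBlocks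
        (ΦFᵀ * Pm * ΦF - Pm + Fᵀ * Ru * F + Rx + lam • (CFᵀ * CF))
        (ΦFᵀ * Pm * Bp)
        (Bpᵀ * Pm * ΦF)
        (Bpᵀ * Pm * Bp - lam • (1 : Matrix (Fin q) (Fin q) ℝ)))).PosSemidef) :
    ∀ (x : ℕ → Fin n → ℝ) (p : ℕ → Fin q → ℝ),
      (∀ t, x (t + 1) = ΦF *ᵥ x t + Bp *ᵥ p t) →
      (∀ t, p t ⬝ᵥ p t ≤ (CF *ᵥ x t) ⬝ᵥ (CF *ᵥ x t)) →
      ∀ T : ℕ,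
        ∑ t ∈ Finset.range (T + 1),
          ((x t) ⬝ᵥ (Rx *ᵥ x t) + (F *ᵥ x t) ⬝ᵥ (Ru *ᵥ (F *ᵥ x t)))
        ≤ (x 0) ⬝ᵥ (Pm *ᵥ x 0) := by
  intro x p hx hp T
  have transpose_form : ∀ {k l r : ℕ} (A : Matrix (Fin k) (Fin l) ℝ) (M : Matrix (Fin k) (Fin r) ℝ)
      (v : Fin l → ℝ) (w : Fin r → ℝ), v ⬝ᵥ (Aᵀ *ᵥ (M *ᵥ w)) = (A *ᵥ v) ⬝ᵥ (M *ᵥ w) := by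
    intro k l r A M v w
    rw [dotProduct_mulVec, vecMul_transpose]
  have step : ∀ t, (x t) ⬝ᵥ (Rx *ᵥ x t) + (F *ᵥ x t) ⬝ᵥ (Ru *ᵥ (F *ᵥ x t))
      ≤ (x t) ⬝ᵥ (Pm *ᵥ x t) - (x (t + 1)) ⬝ᵥ (Pm *ᵥ x (t + 1)) := by
    intro t
    have h := hLMI.dotProduct_mulVec_nonneg (Sum.elim (x t) (p t))
    have hpt := mul_le_mul_of_nonneg_left (hp t) hlam.le
    rw [hx t]
    simp only [star_trivial, neg_mulVec, dotProduct_neg, fromBlocks_mulVec, sumElim_dotProduct_sumElim,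
      Sum.elim_comp_inl, Sum.elim_comp_inr, add_mulVec, sub_mulVec, smul_mulVec, one_mulVec,
      mulVec_add, dotProduct_add, add_dotProduct, dotProduct_sub, dotProduct_smul, smul_eq_mul,
      ← mulVec_mulVec, transpose_form] at h ⊢
    linarith
  have telescoped : ∀ N, ∑ t ∈ Finset.range N,
      ((x t) ⬝ᵥ (Rx *ᵥ x t) + (F *ᵥ x t) ⬝ᵥ (Ru *ᵥ (F *ᵥ x t)))
      ≤ (x 0) ⬝ᵥ (Pm *ᵥ x 0) - (x N) ⬝ᵥ (Pm *ᵥ x N) := by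
    intro N
    induction N with
    | zero => simp
    | succ k ih =>
      rw [Finset.sum_range_succ]
      linarith [step k]
  have hV := hPm.posSemidef.dotProduct_mulVec_nonneg (x (T + 1))
  rw [star_trivial] at hV
  linarith [telescoped (T + 1)]
end

section
/- Let S be a symmetric positive semidefinite (n−m)×(n−m) matrix, Q̄₁ an m×m symmetric positive definite matrix, Q̄₂ an (n−m)×(n−m) symmetric positive definite matrix, x_a ∈ ℝ^m, and τ̄ ≥ 0. If the block matrices [[1 − τ̄ , x_aᵀ],[x_a , Q̄₁]] and [[τ̄ S , I],[I , Q̄₂]] are both positive semidefinite, then every x_na ∈ ℝ^{n−m} with x_naᵀ S x_na ≤ 1 satisfies x_aᵀ Q̄₁^{-1} x_a + x_naᵀ Q̄₂^{-1} x_na ≤ 1; that is, every state x = (x_a, x_na) whose unmeasured part lies in the set D(S) belongs to the ellipsoid {x : xᵀ diag(Q̄₁, Q̄₂)^{-1} x ≤ 1}. -/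
/-!
Both block matrices have an invertible lower-right block, so their positivity is equivalent to
positivity of the Schur complements: `1 - τb - xaᵀ Q1⁻¹ xa ≥ 0` and `τb • S - Q2⁻¹ ⪰ 0`.
The second gives `xnaᵀ Q2⁻¹ xna ≤ τb * (xnaᵀ S xna) ≤ τb` on the set `xnaᵀ S xna ≤ 1`; adding the
first yields the claim.
-/



open Matrix

theorem stmt_4
    {m k : ℕ}
    (S : Matrix (Fin k) (Fin k) ℝ) (hS : S.PosSemidef) (hSs : S.IsSymm)
    (Q1 : Matrix (Fin m) (Fin m) ℝ) (hQ1 : Q1.PosDef) (hQ1s : Q1.IsSymm)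
    (Q2 : Matrix (Fin k) (Fin k) ℝ) (hQ2 : Q2.PosDef) (hQ2s : Q2.IsSymm)
    (xa : Fin m → ℝ) (τb : ℝ) (hτb : 0 ≤ τb)
    (h1 : (Matrix.fromBlocks
        (Matrix.of fun (_ : Fin 1) (_ : Fin 1) => 1 - τb)
        (Matrix.of fun (_ : Fin 1) (j : Fin m) => xa j)
        (Matrix.of fun (i : Fin m) (_ : Fin 1) => xa i)
        Q1).PosSemidef)
    (h2 : (Matrix.fromBlocks (τb • S) (1 : Matrix (Fin k) (Fin k) ℝ)
        (1 : Matrix (Fin k) (Fin k) ℝ) Q2).PosSemidef) :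
    ∀ xna : Fin k → ℝ, xna ⬝ᵥ (S *ᵥ xna) ≤ 1 →
      xa ⬝ᵥ (Q1⁻¹ *ᵥ xa) + xna ⬝ᵥ (Q2⁻¹ *ᵥ xna) ≤ 1 := by
  intro xna hx
  have : Invertible Q1 := hQ1.isUnit.invertible
  have : Invertible Q2 := hQ2.isUnit.invertible
  have e1 : (Matrix.of fun (i : Fin m) (_ : Fin 1) => xa i)
      = (Matrix.of fun (_ : Fin 1) (j : Fin m) => xa j)ᴴ := by
    ext i j
    simp
  have e2 : (1 : Matrix (Fin k) (Fin k) ℝ) = 1ᴴ := by simp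
  rw [e1, Matrix.PosDef.fromBlocks₂₂ _ _ hQ1] at h1
  have h2c : (Matrix.fromBlocks (τb • S) (1 : Matrix (Fin k) (Fin k) ℝ)
      (1 : Matrix (Fin k) (Fin k) ℝ)ᴴ Q2).PosSemidef := by rwa [← e2]
  rw [Matrix.PosDef.fromBlocks₂₂ _ _ hQ2] at h2c
  -- The first Schur complement is a `1 × 1` matrix; its entry is its diagonal.
  have k1 : xa ⬝ᵥ (Q1⁻¹ *ᵥ xa) ≤ 1 - τb := by
    have h := h1.diag_nonneg (i := 0)
    rw [Matrix.mul_assoc] at h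
    simpa [Matrix.mul_apply, dotProduct, mulVec] using h
  have k2 : xna ⬝ᵥ (Q2⁻¹ *ᵥ xna) ≤ τb * (xna ⬝ᵥ (S *ᵥ xna)) := by
    have h := h2c.dotProduct_mulVec_nonneg xna
    simpa [sub_mulVec, smul_mulVec, dotProduct_sub] using h
  nlinarith [mul_le_mul_of_nonneg_left hx hτb]
end

section
/- Let Q̄₁ be an m×m symmetric positive definite matrix, Y₁ ∈ ℝ^{r×m}, and ū > 0. If the block matrix [[ū² I_r , Y₁],[Y₁ᵀ , Q̄₁]] is positive semidefinite, then every y ∈ ℝ^m with yᵀ Q̄₁^{-1} y ≤ 1 satisfies ‖Y₁ Q̄₁^{-1} y‖₂² ≤ ū²; that is, the output feedback law u = K y with K := Y₁ Q̄₁^{-1} satisfies the input constraint uᵀ u ≤ ū² on the ellipsoid {y : yᵀ Q̄₁^{-1} y ≤ 1}. -/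
/-!
Put `z = Q1⁻¹ y` and `u = Y1 z`, so that `u` is the input and `zᵀ Q1 z = yᵀ z ≤ 1`. The quadratic
form of the block matrix at `(u, -t z)` equals `ub² |u|² - 2 t |u|² + t² yᵀ z`; its nonnegativity
at `t = ub²` gives `|u|² ≤ ub² yᵀ z ≤ ub²`.
-/

open Matrix

theorem stmt_6
    {m r : ℕ}
    (Q1 : Matrix (Fin m) (Fin m) ℝ) (hQ1 : Q1.PosDef) (hQ1s : Q1.IsSymm)
    (Y1 : Matrix (Fin r) (Fin m) ℝ) (ub : ℝ) (hub : 0 < ub)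
    (h : (Matrix.fromBlocks (ub ^ 2 • (1 : Matrix (Fin r) (Fin r) ℝ)) Y1
        Y1ᵀ Q1).PosSemidef) :
    ∀ y : Fin m → ℝ, y ⬝ᵥ (Q1⁻¹ *ᵥ y) ≤ 1 →
      ((Y1 * Q1⁻¹) *ᵥ y) ⬝ᵥ ((Y1 * Q1⁻¹) *ᵥ y) ≤ ub ^ 2 := by
  intro y hy
  rw [← mulVec_mulVec]
  have hQz : Q1 *ᵥ (Q1⁻¹ *ᵥ y) = y := by
    rw [mulVec_mulVec, mul_nonsing_inv _ ((isUnit_iff_isUnit_det _).1 hQ1.isUnit), one_mulVec]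
  generalize Q1⁻¹ *ᵥ y = z at hy hQz ⊢
  generalize hu : Y1 *ᵥ z = u
  -- The choice `t = ub²` of the scaling parameter.
  have key := h.dotProduct_mulVec_nonneg (Sum.elim u (-(ub ^ 2) • z))
  have hzu : z ⬝ᵥ (Y1ᵀ *ᵥ u) = u ⬝ᵥ u := by
    rw [mulVec_transpose, dotProduct_comm, ← dotProduct_mulVec, hu]
  simp only [star_trivial, fromBlocks_mulVec, Sum.elim_comp_inl, Sum.elim_comp_inr,
    sumElim_dotProduct_sumElim, smul_mulVec, one_mulVec, mulVec_smul, hu, hQz,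
    dotProduct_add, dotProduct_smul, smul_dotProduct, hzu, smul_eq_mul,
    dotProduct_comm z y] at key
  have hpos : 0 < ub ^ 2 := by positivity
  have hbound : 0 ≤ ub ^ 2 * (ub ^ 2 * (y ⬝ᵥ z) - u ⬝ᵥ u) := by linarith
  have := nonneg_of_mul_nonneg_right hbound hpos
  nlinarith
end

section
/- Let Ā ∈ ℝ^{m×n}, B̄ ∈ ℝ^{m×q}, C_K ∈ ℝ^{q×n}, δ > 0 and σ ≥ 0 be such that σ I − B̄ᵀ B̄ ≻ 0. Define T := δ^{-2} ( Āᵀ Ā + σ C_Kᵀ C_K + Āᵀ B̄ (σ I − B̄ᵀ B̄)^{-1} B̄ᵀ Ā ). Then for every x ∈ ℝⁿ with xᵀ T x ≤ 1 and every p ∈ ℝ^q with ‖p‖₂² ≤ ‖C_K x‖₂², one has ‖Ā x + B̄ p‖₂² ≤ δ². -/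
/-!
Write `M = σ I - BᵀB`, `a = A x`, `b = BᵀA x` and `w = M⁻¹ b`. The proof completes the square in `p`:
since `M w = b` and `M` is symmetric,
`0 ≤ (p - w)ᵀ M (p - w) = σ ‖p‖² - ‖B p‖² - 2 ⟨B p, a⟩ + bᵀ M⁻¹ b`,
so `‖a + B p‖² ≤ ‖a‖² + σ ‖p‖² + bᵀ M⁻¹ b`. Bounding `‖p‖²` by `‖C x‖²` turns the right-hand side into
`δ² xᵀ T x`.
-/

open Matrix

theorem stmt_8
    {n m q : ℕ}
    (Ab : Matrix (Fin m) (Fin n) ℝ) (Bb : Matrix (Fin m) (Fin q) ℝ)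
    (CK : Matrix (Fin q) (Fin n) ℝ)
    (δ σ : ℝ) (hδ : 0 < δ) (hσ : 0 ≤ σ)
    (hpos : (σ • (1 : Matrix (Fin q) (Fin q) ℝ) - Bbᵀ * Bb).PosDef)
    (T : Matrix (Fin n) (Fin n) ℝ)
    (hT : T = (δ ^ 2)⁻¹ •
      (Abᵀ * Ab + σ • (CKᵀ * CK) +
        Abᵀ * Bb * (σ • (1 : Matrix (Fin q) (Fin q) ℝ) - Bbᵀ * Bb)⁻¹ * Bbᵀ * Ab)) :
    ∀ (x : Fin n → ℝ) (p : Fin q → ℝ),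
      x ⬝ᵥ (T *ᵥ x) ≤ 1 →
      p ⬝ᵥ p ≤ (CK *ᵥ x) ⬝ᵥ (CK *ᵥ x) →
      (Ab *ᵥ x + Bb *ᵥ p) ⬝ᵥ (Ab *ᵥ x + Bb *ᵥ p) ≤ δ ^ 2 := by
  intro x p hx hp
  set M : Matrix (Fin q) (Fin q) ℝ := σ • (1 : Matrix (Fin q) (Fin q) ℝ) - Bbᵀ * Bb with hM
  set a := Ab *ᵥ x with ha
  set b := Bbᵀ *ᵥ a with hb
  set w := M⁻¹ *ᵥ b with hw
  have hMw : M *ᵥ w = b := by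
    have hu : IsUnit M.det := (Matrix.isUnit_iff_isUnit_det M).1 hpos.isUnit
    rw [hw, mulVec_mulVec, Matrix.mul_nonsing_inv _ hu, one_mulVec]
  have hMt : Mᵀ = M := by simp [hM, transpose_sub]
  have hsq : 0 ≤ (p - w) ⬝ᵥ (M *ᵥ (p - w)) := by
    simpa using hpos.posSemidef.dotProduct_mulVec_nonneg (p - w)
  have hwMp : w ⬝ᵥ (M *ᵥ p) = p ⬝ᵥ b := by
    rw [dotProduct_mulVec, ← mulVec_transpose, hMt, hMw, dotProduct_comm]
  have hpMp : p ⬝ᵥ (M *ᵥ p) = σ * (p ⬝ᵥ p) - (Bb *ᵥ p) ⬝ᵥ (Bb *ᵥ p) := by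
    rw [hM, sub_mulVec, dotProduct_sub, smul_mulVec, one_mulVec, dotProduct_smul, smul_eq_mul,
      ← mulVec_mulVec, dotProduct_mulVec p Bbᵀ, vecMul_transpose]
  have hpb : p ⬝ᵥ b = a ⬝ᵥ (Bb *ᵥ p) := by
    rw [hb, dotProduct_mulVec, vecMul_transpose, dotProduct_comm]
  have hexp : (p - w) ⬝ᵥ (M *ᵥ (p - w)) = p ⬝ᵥ (M *ᵥ p) - 2 * (p ⬝ᵥ b) + b ⬝ᵥ w := by
    rw [mulVec_sub, hMw, sub_dotProduct, dotProduct_sub, dotProduct_sub, hwMp,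
      dotProduct_comm w b]
    ring
  have hTx : x ⬝ᵥ (T *ᵥ x) =
      (δ ^ 2)⁻¹ * (a ⬝ᵥ a + σ * ((CK *ᵥ x) ⬝ᵥ (CK *ᵥ x)) + b ⬝ᵥ w) := by
    have h1 : x ⬝ᵥ ((Abᵀ * Ab) *ᵥ x) = a ⬝ᵥ a := by
      rw [← mulVec_mulVec, dotProduct_mulVec, vecMul_transpose]
    have h2 : x ⬝ᵥ ((CKᵀ * CK) *ᵥ x) = (CK *ᵥ x) ⬝ᵥ (CK *ᵥ x) := by
      rw [← mulVec_mulVec, dotProduct_mulVec, vecMul_transpose]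
    have h3 : x ⬝ᵥ ((Abᵀ * Bb * M⁻¹ * Bbᵀ * Ab) *ᵥ x) = b ⬝ᵥ w := by
      rw [← mulVec_mulVec, ← mulVec_mulVec, ← mulVec_mulVec, ← mulVec_mulVec, dotProduct_mulVec,
        vecMul_transpose, dotProduct_mulVec, ← mulVec_transpose]
    rw [hT, smul_mulVec, dotProduct_smul, smul_eq_mul, add_mulVec, add_mulVec, dotProduct_add,
      dotProduct_add, smul_mulVec, dotProduct_smul, smul_eq_mul, h1, h2, h3]
  have hbound : a ⬝ᵥ a + σ * ((CK *ᵥ x) ⬝ᵥ (CK *ᵥ x)) + b ⬝ᵥ w ≤ δ ^ 2 := by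
    rw [hTx, inv_mul_le_iff₀ (by positivity), mul_one] at hx
    exact hx
  have hσp := mul_le_mul_of_nonneg_left hp hσ
  rw [add_dotProduct, dotProduct_add, dotProduct_add, dotProduct_comm (Bb *ᵥ p) a]
  linarith
end

section
/- Let F̃, S̄ and Z̃₀,…,Z̃_m be symmetric q×q matrices, D̃ and M̃₀,…,M̃_m be q×r matrices, and Ẽ and Ñ₀,…,Ñ_m be symmetric r×r matrices. Let τ₀,…,τ_m ≥ 0 and τ_{m+1} ≥ 0 be such that Θ := −F̃ − Σ_{i=0}^{m} τᵢ Z̃ᵢ − τ_{m+1} S̄ is positive definite, and let L be a matrix with Lᵀ L = Ẽ + Σ_{i=0}^{m} τᵢ Ñᵢ + (D̃ + Σ_{i=0}^{m} τᵢ M̃ᵢ)ᵀ Θ^{-1} (D̃ + Σ_{i=0}^{m} τᵢ M̃ᵢ). Fix z ∈ ℝ^r and J ∈ ℝ such that the block matrix [[J − τ_{m+1} , −(L z)ᵀ],[−L z , I]] is positive semidefinite. Then for every w ∈ ℝ^q satisfying wᵀ Z̃ᵢ w + 2 wᵀ M̃ᵢ z + zᵀ Ñᵢ z ≥ 0 for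 all i = 0,…,m and wᵀ S̄ w + 1 ≥ 0, one has wᵀ F̃ w + 2 wᵀ D̃ z + zᵀ Ẽ z ≤ J. -/
/-!
The bound is the sufficiency direction of the S-procedure. Write `p = (D + ∑ τᵢ Mᵢ) z`. Adding the
nonnegative quantities `τᵢ * (i-th constraint)` and `τ' * (wᵀ S w + 1)` to the objective gives
`-wᵀ Θ w + 2 wᵀ p + zᵀ (E + ∑ τᵢ Nᵢ) z + τ'`. Completing the square in `w`
(`two_mul_dotProduct_le_of_posDef`) bounds this by `pᵀ Θ⁻¹ p + zᵀ (E + ∑ τᵢ Nᵢ) z + τ'`, which is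
`‖L z‖² + τ'` by the choice of `L`. Evaluating the block matrix at `(1, L z)`
(`dotProduct_self_le_of_block_posSemidef`) shows that this is at most `J`.
-/

open Matrix

/-- Completing the square: `0 ≤ (w - Θ⁻¹ p)ᵀ Θ (w - Θ⁻¹ p)`, expanded. -/
lemma two_mul_dotProduct_le_of_posDef {n : Type*} [Fintype n] [DecidableEq n]
    {Θ : Matrix n n ℝ} (hΘ : Θ.PosDef) (w p : n → ℝ) :
    2 * (w ⬝ᵥ p) - w ⬝ᵥ (Θ *ᵥ w) ≤ p ⬝ᵥ (Θ⁻¹ *ᵥ p) := by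
  have hinv : Θ *ᵥ (Θ⁻¹ *ᵥ p) = p := by
    rw [mulVec_mulVec, mul_nonsing_inv _ ((isUnit_iff_isUnit_det _).1 hΘ.isUnit), one_mulVec]
  have hsymm : Θᵀ = Θ := by simpa using hΘ.isHermitian.eq
  have hcross : (Θ⁻¹ *ᵥ p) ⬝ᵥ (Θ *ᵥ w) = w ⬝ᵥ p := by
    rw [dotProduct_mulVec, ← mulVec_transpose, hsymm, hinv, dotProduct_comm]
  have h := hΘ.posSemidef.dotProduct_mulVec_nonneg (w - Θ⁻¹ *ᵥ p)
  simp only [star_trivial, mulVec_sub, hinv, dotProduct_sub, sub_dotProduct, hcross] at h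
  rw [dotProduct_comm (Θ⁻¹ *ᵥ p) p] at h
  linarith

/-- The half of the Schur complement criterion that is needed: test the matrix on `(1, v)`. -/
lemma dotProduct_self_le_of_block_posSemidef {n : Type*} [Fintype n] [DecidableEq n]
    {a : ℝ} {v : n → ℝ}
    (h : (Matrix.fromBlocks
        (Matrix.of fun (_ : Fin 1) (_ : Fin 1) => a)
        (Matrix.of fun (_ : Fin 1) (j : n) => -(v j))
        (Matrix.of fun (i : n) (_ : Fin 1) => -(v i))
        (1 : Matrix n n ℝ)).PosSemidef) :
    v ⬝ᵥ v ≤ a := by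
  have h1 := h.dotProduct_mulVec_nonneg (Sum.elim (fun _ => 1) v)
  rw [star_trivial, fromBlocks_mulVec] at h1
  simp only [Sum.elim_comp_inl, Sum.elim_comp_inr, one_mulVec, sumElim_dotProduct_sumElim,
    dotProduct_add] at h1
  simp [dotProduct, mulVec] at h1
  simp only [dotProduct]
  linarith

theorem stmt_10
    {q r s m : ℕ}
    (Ft Sb : Matrix (Fin q) (Fin q) ℝ) (hFt : Ft.IsSymm) (hSb : Sb.IsSymm)
    (Zt : Fin (m + 1) → Matrix (Fin q) (Fin q) ℝ) (hZt : ∀ i, (Zt i).IsSymm)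
    (Dt : Matrix (Fin q) (Fin r) ℝ)
    (Mt : Fin (m + 1) → Matrix (Fin q) (Fin r) ℝ)
    (Et : Matrix (Fin r) (Fin r) ℝ) (hEt : Et.IsSymm)
    (Nt : Fin (m + 1) → Matrix (Fin r) (Fin r) ℝ) (hNt : ∀ i, (Nt i).IsSymm)
    (τ : Fin (m + 1) → ℝ) (hτ : ∀ i, 0 ≤ τ i) (τ' : ℝ) (hτ' : 0 ≤ τ')
    (Θ : Matrix (Fin q) (Fin q) ℝ)
    (hΘ : Θ = -Ft - (∑ i, τ i • Zt i) - τ' • Sb)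
    (hΘpos : Θ.PosDef)
    (L : Matrix (Fin s) (Fin r) ℝ)
    (hL : Lᵀ * L = Et + (∑ i, τ i • Nt i) +
      (Dt + ∑ i, τ i • Mt i)ᵀ * Θ⁻¹ * (Dt + ∑ i, τ i • Mt i))
    (z : Fin r → ℝ) (J : ℝ)
    (hLMI : (Matrix.fromBlocks
        (Matrix.of fun (_ : Fin 1) (_ : Fin 1) => J - τ')
        (Matrix.of fun (_ : Fin 1) (j : Fin s) => -((L *ᵥ z) j))
        (Matrix.of fun (i : Fin s) (_ : Fin 1) => -((L *ᵥ z) i))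
        (1 : Matrix (Fin s) (Fin s) ℝ)).PosSemidef) :
    ∀ w : Fin q → ℝ,
      (∀ i, 0 ≤ w ⬝ᵥ (Zt i *ᵥ w) + 2 * (w ⬝ᵥ (Mt i *ᵥ z)) + z ⬝ᵥ (Nt i *ᵥ z)) →
      0 ≤ w ⬝ᵥ (Sb *ᵥ w) + 1 →
      w ⬝ᵥ (Ft *ᵥ w) + 2 * (w ⬝ᵥ (Dt *ᵥ z)) + z ⬝ᵥ (Et *ᵥ z) ≤ J := by
  intro w hw hS
  have hJ := dotProduct_self_le_of_block_posSemidef hLMI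
  have hsq := two_mul_dotProduct_le_of_posDef hΘpos w ((Dt + ∑ i, τ i • Mt i) *ᵥ z)
  have hLz : (L *ᵥ z) ⬝ᵥ (L *ᵥ z) = z ⬝ᵥ ((Lᵀ * L) *ᵥ z) := by
    rw [← mulVec_mulVec, dotProduct_mulVec z, vecMul_transpose]
  have hp : z ⬝ᵥ (((Dt + ∑ i, τ i • Mt i)ᵀ * Θ⁻¹ * (Dt + ∑ i, τ i • Mt i)) *ᵥ z) =
      ((Dt + ∑ i, τ i • Mt i) *ᵥ z) ⬝ᵥ (Θ⁻¹ *ᵥ ((Dt + ∑ i, τ i • Mt i) *ᵥ z)) := by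
    rw [Matrix.mul_assoc, ← mulVec_mulVec, ← mulVec_mulVec, dotProduct_mulVec z, vecMul_transpose]
  have hΘw : w ⬝ᵥ (Θ *ᵥ w) = -(w ⬝ᵥ (Ft *ᵥ w)) - ∑ i, τ i * (w ⬝ᵥ (Zt i *ᵥ w))
      - τ' * (w ⬝ᵥ (Sb *ᵥ w)) := by
    simp [hΘ, sub_mulVec, neg_mulVec, sum_mulVec, smul_mulVec, dotProduct_sub, dotProduct_sum]
  have hM : w ⬝ᵥ ((Dt + ∑ i, τ i • Mt i) *ᵥ z) =
      w ⬝ᵥ (Dt *ᵥ z) + ∑ i, τ i * (w ⬝ᵥ (Mt i *ᵥ z)) := by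
    simp [add_mulVec, sum_mulVec, smul_mulVec, dotProduct_sum]
  have hN : z ⬝ᵥ ((Et + ∑ i, τ i • Nt i) *ᵥ z) =
      z ⬝ᵥ (Et *ᵥ z) + ∑ i, τ i * (z ⬝ᵥ (Nt i *ᵥ z)) := by
    simp [add_mulVec, sum_mulVec, smul_mulVec, dotProduct_sum]
  have hsum : 0 ≤ ∑ i, τ i * (w ⬝ᵥ (Zt i *ᵥ w) + 2 * (w ⬝ᵥ (Mt i *ᵥ z)) + z ⬝ᵥ (Nt i *ᵥ z)) :=
    Finset.sum_nonneg fun i _ => mul_nonneg (hτ i) (hw i)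
  simp only [mul_add, mul_left_comm _ (2 : ℝ), Finset.sum_add_distrib, ← Finset.mul_sum] at hsum
  have hS' := mul_nonneg hτ' hS
  rw [hLz, hL, add_mulVec, dotProduct_add, hp, hN] at hJ
  rw [hM, hΘw] at hsq
  linarith
end

section
/- Fix k ≥ 0. Let x = (y, x_na) ∈ ℝ^{ny}×ℝ^{n−ny}, inputs c₀,…,c_k ∈ ℝ^m, uncertainties p₀,…,p_k ∈ ℝ^q, and define predictions x̂₀ := x, x̂_{j+1} := Φ_K x̂_j + G c_j + B_p p_j. Write w := (x_na, p₀, …, p_k) and z := (y, c₀, …, c_k). Suppose symmetric F_k, matrix D_k, symmetric E_k satisfy x̂_{k+1}ᵀ R_x x̂_{k+1} + c_kᵀ R_u c_k = wᵀ F_k w + 2 wᵀ D_k z + zᵀ E_k z identically in (w,z); for each i ∈ {0,…,k}, symmetric Zᵢ, matrix Mᵢ, symmetric Nᵢ satisfy ‖C_K x̂ᵢ + D_q cᵢ‖₂² − ‖pᵢ‖₂² = wᵀ Zᵢ w + 2 wᵀ Mᵢ z + zᵀ Nᵢ z identically in (w,z); and S̄ := blockdiag(−S, 0) so that wᵀ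 S̄ w = −x_naᵀ S x_na. Let τ₀,…,τ_{k+1} ≥ 0 with Θ := −F_k − Σ_{i=0}^{k} τᵢ Zᵢ − τ_{k+1} S̄ ≻ 0, let L_k satisfy L_kᵀ L_k = E_k + Σ τᵢ Nᵢ + (D_k + Σ τᵢ Mᵢ)ᵀ Θ^{-1} (D_k + Σ τᵢ Mᵢ), and let J_k ∈ ℝ be such that [[J_k − τ_{k+1} , −(L_k z)ᵀ],[−L_k z , I]] ⪰ 0. Then for all x_na with x_naᵀ S x_na ≤ 1 and all p₀,…,p_k with ‖pᵢ‖₂² ≤ ‖C_K x̂ᵢ + D_q cᵢ‖₂² for each i, one has x̂_{k+1}ᵀ R_x x̂_{k+1} + c_kᵀ R_u c_k ≤ J_k. -/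
/-!
The bound is the S-procedure followed by a Schur complement. With `w = (x_na, p)` and `z = (y, c)`,
the channel constraints and the ellipsoid constraint enter with the nonnegative multipliers `τ i`
and `τ'`, so the cost is at most
`τ' - wᵀ Θ w + 2 wᵀ (Dk + ∑ τ i • M i) z + zᵀ (Ek + ∑ τ i • N i) z`.
Since `Θ` is positive definite, completing the square in `w` (`two_mul_dotProduct_le`) bounds this
by `τ' + ‖L z‖²`, and the LMI says exactly that `‖L z‖² ≤ J - τ'` (`dotProduct_self_le_of_lmi`).
-/

open Matrix

/-- The `j`-step-ahead prediction `x̂_j` generated by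
`x̂_0 = x0`, `x̂_{j+1} = Φ_K x̂_j + G c_j + B_p p_j`. -/
def pred {n : Type*} [Fintype n] {m q : ℕ} (ΦK : Matrix n n ℝ)
    (G : Matrix n (Fin m) ℝ) (Bp : Matrix n (Fin q) ℝ)
    (x0 : n → ℝ) (c : ℕ → Fin m → ℝ) (p : ℕ → Fin q → ℝ) : ℕ → n → ℝ
  | 0 => x0
  | j + 1 => ΦK *ᵥ pred ΦK G Bp x0 c p j + G *ᵥ c j + Bp *ᵥ p j

/-- Completing the square: the difference of the two sides is `vᵀΘv` with `v = w - Θ⁻¹d`. -/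
lemma two_mul_dotProduct_le {ι : Type*} [Fintype ι] [DecidableEq ι] {Θ : Matrix ι ι ℝ}
    (hΘ : Θ.PosDef) (w d : ι → ℝ) :
    2 * (w ⬝ᵥ d) - w ⬝ᵥ (Θ *ᵥ w) ≤ d ⬝ᵥ (Θ⁻¹ *ᵥ d) := by
  have hsymm : Θᵀ = Θ := by
    have h := hΘ.isHermitian.eq
    rwa [conjTranspose_eq_transpose_of_trivial] at h
  have hinv : Θ *ᵥ (Θ⁻¹ *ᵥ d) = d := by
    rw [mulVec_mulVec, mul_nonsing_inv _ ((isUnit_iff_isUnit_det _).mp hΘ.isUnit), one_mulVec]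
  have hnonneg := hΘ.posSemidef.dotProduct_mulVec_nonneg (w - Θ⁻¹ *ᵥ d)
  have hcross : (Θ⁻¹ *ᵥ d) ⬝ᵥ (Θ *ᵥ w) = w ⬝ᵥ d := by
    rw [dotProduct_mulVec, ← mulVec_transpose, hsymm, hinv, dotProduct_comm]
  rw [star_trivial, mulVec_sub, hinv, sub_dotProduct, dotProduct_sub, dotProduct_sub, hcross,
    dotProduct_comm (Θ⁻¹ *ᵥ d) d] at hnonneg
  linarith

/-- One direction of the Schur complement: the block LMI gives `‖v‖² ≤ a`. It is obtained by
testing the matrix on the vector `(1, v)`. -/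
lemma dotProduct_self_le_of_lmi {s : ℕ} {a : ℝ} {v : Fin s → ℝ}
    (h : (Matrix.fromBlocks
        (Matrix.of fun (_ : Fin 1) (_ : Fin 1) => a)
        (Matrix.of fun (_ : Fin 1) (j : Fin s) => -(v j))
        (Matrix.of fun (i : Fin s) (_ : Fin 1) => -(v i))
        (1 : Matrix (Fin s) (Fin s) ℝ)).PosSemidef) :
    v ⬝ᵥ v ≤ a := by
  have h1 := h.dotProduct_mulVec_nonneg (Sum.elim (fun _ => 1) v)
  rw [star_trivial, fromBlocks_mulVec, sumElim_dotProduct_sumElim] at h1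
  simp [dotProduct, mulVec, mul_add] at h1
  simp only [dotProduct]
  linarith

theorem stmt_11
    {ny nna m q s k : ℕ}
    -- state x = (y, x_na) lives in ℝ^{ny} × ℝ^{n-ny}; we identify ℝⁿ with Fin ny ⊕ Fin nna → ℝ
    (ΦK : Matrix (Fin ny ⊕ Fin nna) (Fin ny ⊕ Fin nna) ℝ)
    (G : Matrix (Fin ny ⊕ Fin nna) (Fin m) ℝ)
    (Bp : Matrix (Fin ny ⊕ Fin nna) (Fin q) ℝ)
    (CK : Matrix (Fin q) (Fin ny ⊕ Fin nna) ℝ)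
    (Dq : Matrix (Fin q) (Fin m) ℝ)
    (Rx : Matrix (Fin ny ⊕ Fin nna) (Fin ny ⊕ Fin nna) ℝ) (hRx : Rx.PosSemidef)
    (Ru : Matrix (Fin m) (Fin m) ℝ) (hRu : Ru.PosSemidef)
    (S : Matrix (Fin nna) (Fin nna) ℝ) (hS : S.PosSemidef)
    (y : Fin ny → ℝ) (c : ℕ → Fin m → ℝ)
    (Fk : Matrix (Fin nna ⊕ (Fin (k + 1) × Fin q)) (Fin nna ⊕ (Fin (k + 1) × Fin q)) ℝ)
    (hFks : Fk.IsSymm)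
    (Dk : Matrix (Fin nna ⊕ (Fin (k + 1) × Fin q)) (Fin ny ⊕ (Fin (k + 1) × Fin m)) ℝ)
    (Ek : Matrix (Fin ny ⊕ (Fin (k + 1) × Fin m)) (Fin ny ⊕ (Fin (k + 1) × Fin m)) ℝ)
    (hEks : Ek.IsSymm)
    -- the cost x̂_{k+1}ᵀ Rx x̂_{k+1} + c_kᵀ Ru c_k equals the quadratic form in (w,z), identically
    (hFDE : ∀ (y' : Fin ny → ℝ) (xna' : Fin nna → ℝ)
        (c' : ℕ → Fin m → ℝ) (p' : ℕ → Fin q → ℝ),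
      (pred ΦK G Bp (Sum.elim y' xna') c' p' (k + 1)) ⬝ᵥ
          (Rx *ᵥ pred ΦK G Bp (Sum.elim y' xna') c' p' (k + 1)) +
        (c' k) ⬝ᵥ (Ru *ᵥ c' k)
      = (Sum.elim xna' (fun ij => p' ij.1 ij.2)) ⬝ᵥ
          (Fk *ᵥ Sum.elim xna' (fun ij => p' ij.1 ij.2)) +
        2 * ((Sum.elim xna' (fun ij => p' ij.1 ij.2)) ⬝ᵥ
          (Dk *ᵥ Sum.elim y' (fun ij => c' ij.1 ij.2))) +
        (Sum.elim y' (fun ij => c' ij.1 ij.2)) ⬝ᵥ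
          (Ek *ᵥ Sum.elim y' (fun ij => c' ij.1 ij.2)))
    (Z : Fin (k + 1) →
      Matrix (Fin nna ⊕ (Fin (k + 1) × Fin q)) (Fin nna ⊕ (Fin (k + 1) × Fin q)) ℝ)
    (hZs : ∀ i, (Z i).IsSymm)
    (M : Fin (k + 1) →
      Matrix (Fin nna ⊕ (Fin (k + 1) × Fin q)) (Fin ny ⊕ (Fin (k + 1) × Fin m)) ℝ)
    (N : Fin (k + 1) →
      Matrix (Fin ny ⊕ (Fin (k + 1) × Fin m)) (Fin ny ⊕ (Fin (k + 1) × Fin m)) ℝ)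
    (hNs : ∀ i, (N i).IsSymm)
    -- the uncertainty-channel identities, identically in (w,z)
    (hZMN : ∀ (i : Fin (k + 1)) (y' : Fin ny → ℝ) (xna' : Fin nna → ℝ)
        (c' : ℕ → Fin m → ℝ) (p' : ℕ → Fin q → ℝ),
      (CK *ᵥ pred ΦK G Bp (Sum.elim y' xna') c' p' i + Dq *ᵥ c' i) ⬝ᵥ
          (CK *ᵥ pred ΦK G Bp (Sum.elim y' xna') c' p' i + Dq *ᵥ c' i) -
        (p' i) ⬝ᵥ (p' i)
      = (Sum.elim xna' (fun ij => p' ij.1 ij.2)) ⬝ᵥ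
          ((Z i) *ᵥ Sum.elim xna' (fun ij => p' ij.1 ij.2)) +
        2 * ((Sum.elim xna' (fun ij => p' ij.1 ij.2)) ⬝ᵥ
          ((M i) *ᵥ Sum.elim y' (fun ij => c' ij.1 ij.2))) +
        (Sum.elim y' (fun ij => c' ij.1 ij.2)) ⬝ᵥ
          ((N i) *ᵥ Sum.elim y' (fun ij => c' ij.1 ij.2)))
    (Sbar : Matrix (Fin nna ⊕ (Fin (k + 1) × Fin q)) (Fin nna ⊕ (Fin (k + 1) × Fin q)) ℝ)
    (hSbar : Sbar = Matrix.fromBlocks (-S) 0 0 0)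
    (τ : Fin (k + 1) → ℝ) (hτ : ∀ i, 0 ≤ τ i) (τ' : ℝ) (hτ' : 0 ≤ τ')
    (Θ : Matrix (Fin nna ⊕ (Fin (k + 1) × Fin q)) (Fin nna ⊕ (Fin (k + 1) × Fin q)) ℝ)
    (hΘ : Θ = -Fk - (∑ i, τ i • Z i) - τ' • Sbar) (hΘpos : Θ.PosDef)
    (L : Matrix (Fin s) (Fin ny ⊕ (Fin (k + 1) × Fin m)) ℝ)
    (hL : Lᵀ * L = Ek + (∑ i, τ i • N i) +
      (Dk + ∑ i, τ i • M i)ᵀ * Θ⁻¹ * (Dk + ∑ i, τ i • M i))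
    (J : ℝ)
    (hLMI : (Matrix.fromBlocks
        (Matrix.of fun (_ : Fin 1) (_ : Fin 1) => J - τ')
        (Matrix.of fun (_ : Fin 1) (j : Fin s) =>
          -((L *ᵥ Sum.elim y (fun ij => c ij.1 ij.2)) j))
        (Matrix.of fun (i : Fin s) (_ : Fin 1) =>
          -((L *ᵥ Sum.elim y (fun ij => c ij.1 ij.2)) i))
        (1 : Matrix (Fin s) (Fin s) ℝ)).PosSemidef) :
    ∀ (xna : Fin nna → ℝ) (p : ℕ → Fin q → ℝ),
      xna ⬝ᵥ (S *ᵥ xna) ≤ 1 →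
      (∀ i : Fin (k + 1),
        (p i) ⬝ᵥ (p i) ≤
          (CK *ᵥ pred ΦK G Bp (Sum.elim y xna) c p i + Dq *ᵥ c i) ⬝ᵥ
            (CK *ᵥ pred ΦK G Bp (Sum.elim y xna) c p i + Dq *ᵥ c i)) →
      (pred ΦK G Bp (Sum.elim y xna) c p (k + 1)) ⬝ᵥ
          (Rx *ᵥ pred ΦK G Bp (Sum.elim y xna) c p (k + 1)) +
        (c k) ⬝ᵥ (Ru *ᵥ c k) ≤ J := by
  intro xna p hx hp
  have hcost := hFDE y xna c p
  have hchan := fun i => hZMN i y xna c p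
  have hsq := dotProduct_self_le_of_lmi hLMI
  rw [hcost]
  have hS1 : (Sum.elim xna (fun ij : Fin (k + 1) × Fin q => p ij.1 ij.2)) ⬝ᵥ
      (Sbar *ᵥ Sum.elim xna (fun ij => p ij.1 ij.2)) = -(xna ⬝ᵥ (S *ᵥ xna)) := by
    rw [hSbar, fromBlocks_mulVec, sumElim_dotProduct_sumElim]
    simp [neg_mulVec]
  have hchan_nonneg := fun i => mul_nonneg (hτ i) (sub_nonneg.mpr (hp i))
  simp only [hchan] at hchan_nonneg
  generalize (Sum.elim xna (fun ij : Fin (k + 1) × Fin q => p ij.1 ij.2)) = w at *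
  generalize (Sum.elim y (fun ij : Fin (k + 1) × Fin m => c ij.1 ij.2)) = z at *
  have hsum := Finset.sum_nonneg fun i (_ : i ∈ Finset.univ) => hchan_nonneg i
  have hmax := two_mul_dotProduct_le hΘpos w ((Dk + ∑ i, τ i • M i) *ᵥ z)
  have hLz : (L *ᵥ z) ⬝ᵥ (L *ᵥ z) = z ⬝ᵥ (Ek *ᵥ z) + ∑ i, τ i * (z ⬝ᵥ (N i *ᵥ z)) +
      ((Dk + ∑ i, τ i • M i) *ᵥ z) ⬝ᵥ (Θ⁻¹ *ᵥ ((Dk + ∑ i, τ i • M i) *ᵥ z)) := by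
    have h1 : (L *ᵥ z) ⬝ᵥ (L *ᵥ z) = z ⬝ᵥ ((Lᵀ * L) *ᵥ z) := by
      rw [← mulVec_mulVec, dotProduct_mulVec z, vecMul_transpose]
    rw [h1, hL, add_mulVec, add_mulVec, dotProduct_add, dotProduct_add, sum_mulVec,
      dotProduct_sum, ← mulVec_mulVec, ← mulVec_mulVec, dotProduct_mulVec z (_ᵀ),
      vecMul_transpose]
    simp only [smul_mulVec, dotProduct_smul, smul_eq_mul]
  have hΘw : w ⬝ᵥ (Θ *ᵥ w) = -(w ⬝ᵥ (Fk *ᵥ w)) - ∑ i, τ i * (w ⬝ᵥ (Z i *ᵥ w)) -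
      τ' * (w ⬝ᵥ (Sbar *ᵥ w)) := by
    rw [hΘ, sub_mulVec, sub_mulVec, neg_mulVec, sum_mulVec, dotProduct_sub, dotProduct_sub,
      dotProduct_neg, dotProduct_sum]
    simp only [smul_mulVec, dotProduct_smul, smul_eq_mul]
  have hD : w ⬝ᵥ ((Dk + ∑ i, τ i • M i) *ᵥ z) =
      w ⬝ᵥ (Dk *ᵥ z) + ∑ i, τ i * (w ⬝ᵥ (M i *ᵥ z)) := by
    rw [add_mulVec, sum_mulVec, dotProduct_add, dotProduct_sum]
    simp only [smul_mulVec, dotProduct_smul, smul_eq_mul]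
  have hsplit : ∑ i, τ i * (w ⬝ᵥ (Z i *ᵥ w) + 2 * (w ⬝ᵥ (M i *ᵥ z)) + z ⬝ᵥ (N i *ᵥ z)) =
      ∑ i, τ i * (w ⬝ᵥ (Z i *ᵥ w)) + 2 * ∑ i, τ i * (w ⬝ᵥ (M i *ᵥ z)) +
        ∑ i, τ i * (z ⬝ᵥ (N i *ᵥ z)) := by
    rw [Finset.mul_sum, ← Finset.sum_add_distrib, ← Finset.sum_add_distrib]
    exact Finset.sum_congr rfl fun i _ => by ring
  have hell := mul_nonneg hτ' (sub_nonneg.mpr hx)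
  rw [hsplit] at hsum
  rw [hD, hΘw, hS1] at hmax
  linarith
end

section
/- Fix N ≥ 1. Let x = (y, x_na) ∈ ℝ^{ny}×ℝ^{n−ny}, inputs c₀,…,c_{N−1} ∈ ℝ^m, uncertainties p₀,…,p_{N−1} ∈ ℝ^q, and predictions x̂₀ := x, x̂_{j+1} := Φ_K x̂_j + G c_j + B_p p_j. Write w := (x_na, p₀, …, p_{N−1}) and z := (y, c₀, …, c_{N−1}). Suppose symmetric F, matrix D, symmetric E satisfy x̂_Nᵀ P x̂_N + c_{N−1}ᵀ R_u c_{N−1} = wᵀ F w + 2 wᵀ D z + zᵀ E z identically in (w,z); for each i ∈ {0,…,N−1}, symmetric Zᵢ, matrix Mᵢ, symmetric Nᵢ satisfy ‖C_K x̂ᵢ + D_q cᵢ‖₂² − ‖pᵢ‖₂² = wᵀ Zᵢ w + 2 wᵀ Mᵢ z + zᵀ Nᵢ z identically; and S̄ := blockdiag(−S, 0). Let τ₀,…,τ_N ≥ 0 with Θ := −F − Σ_{i=0}^{N−1} τᵢ Zᵢ − τ_N S̄ ≻ 0, L with Lᵀ L = E + Σ τᵢ Nᵢ + (D + Σ τᵢ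 Mᵢ)ᵀ Θ^{-1} (D + Σ τᵢ Mᵢ), and J ∈ ℝ with [[J − τ_N , −(L z)ᵀ],[−L z , I]] ⪰ 0. Then for all x_na with x_naᵀ S x_na ≤ 1 and all p₀,…,p_{N−1} with ‖pᵢ‖₂² ≤ ‖C_K x̂ᵢ + D_q cᵢ‖₂² for each i, one has x̂_Nᵀ P x̂_N + c_{N−1}ᵀ R_u c_{N−1} ≤ J. -/
open Matrix

/-- Completion of the square: `bᵀ Θ⁻¹ b` bounds `2 wᵀ b - wᵀ Θ w` for every `w`. -/
lemma two_mul_dotProduct_sub_le {ι : Type*} [Fintype ι] [DecidableEq ι]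
    {Θ : Matrix ι ι ℝ} (hΘ : Θ.PosDef) (w b : ι → ℝ) :
    2 * (w ⬝ᵥ b) - w ⬝ᵥ (Θ *ᵥ w) ≤ b ⬝ᵥ (Θ⁻¹ *ᵥ b) := by
  have h := hΘ.posSemidef.dotProduct_mulVec_nonneg (w - Θ⁻¹ *ᵥ b)
  have hdet : IsUnit Θ.det := (Matrix.isUnit_iff_isUnit_det _).1 hΘ.isUnit
  have hb : Θ *ᵥ (Θ⁻¹ *ᵥ b) = b := by
    rw [mulVec_mulVec, mul_nonsing_inv _ hdet, one_mulVec]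
  have hsymm : Θᵀ = Θ := by simpa using hΘ.isHermitian.eq
  have hcross : (Θ⁻¹ *ᵥ b) ⬝ᵥ (Θ *ᵥ w) = w ⬝ᵥ b := by
    rw [dotProduct_mulVec, ← mulVec_transpose, hsymm, hb, dotProduct_comm]
  rw [star_trivial, mulVec_sub, hb, sub_dotProduct, dotProduct_sub, dotProduct_sub, hcross,
    dotProduct_comm (Θ⁻¹ *ᵥ b) b] at h
  linarith

/-- The Schur-complement bound `‖v‖² ≤ a` obtained from `[[a, -vᵀ], [-v, I]] ⪰ 0`. -/
lemma dotProduct_self_le_of_fromBlocks {s : ℕ} (a : ℝ) (v : Fin s → ℝ)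
    (h : (Matrix.fromBlocks
        (Matrix.of fun (_ : Fin 1) (_ : Fin 1) => a)
        (Matrix.of fun (_ : Fin 1) (j : Fin s) => -(v j))
        (Matrix.of fun (i : Fin s) (_ : Fin 1) => -(v i))
        (1 : Matrix (Fin s) (Fin s) ℝ)).PosSemidef) :
    v ⬝ᵥ v ≤ a := by
  have h1 := h.dotProduct_mulVec_nonneg (Sum.elim (fun _ => 1) v)
  rw [star_trivial, fromBlocks_mulVec] at h1
  simp [dotProduct, mulVec, Fintype.sum_sum_type] at h1
  simpa [dotProduct] using h1

lemma dotProduct_sum_smul_mulVec {ι κ α : Type*} [Fintype ι] [Fintype κ] [Fintype α]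
    (τ : α → ℝ) (A : α → Matrix ι κ ℝ) (w : ι → ℝ) (z : κ → ℝ) :
    w ⬝ᵥ ((∑ i, τ i • A i) *ᵥ z) = ∑ i, τ i * (w ⬝ᵥ (A i *ᵥ z)) := by
  simp [sum_mulVec, dotProduct_sum, smul_mulVec]

theorem stmt_12
    {ny nna m q s : ℕ} (N : ℕ) (hN : 1 ≤ N)
    (ΦK : Matrix (Fin ny ⊕ Fin nna) (Fin ny ⊕ Fin nna) ℝ)
    (G : Matrix (Fin ny ⊕ Fin nna) (Fin m) ℝ)
    (Bp : Matrix (Fin ny ⊕ Fin nna) (Fin q) ℝ)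
    (CK : Matrix (Fin q) (Fin ny ⊕ Fin nna) ℝ)
    (Dq : Matrix (Fin q) (Fin m) ℝ)
    (Pm : Matrix (Fin ny ⊕ Fin nna) (Fin ny ⊕ Fin nna) ℝ) (hPm : Pm.PosDef)
    (Ru : Matrix (Fin m) (Fin m) ℝ) (hRu : Ru.PosSemidef)
    (S : Matrix (Fin nna) (Fin nna) ℝ) (hS : S.PosSemidef)
    (y : Fin ny → ℝ) (c : ℕ → Fin m → ℝ)
    (Fm : Matrix (Fin nna ⊕ (Fin N × Fin q)) (Fin nna ⊕ (Fin N × Fin q)) ℝ) (hFms : Fm.IsSymm)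
    (Dm : Matrix (Fin nna ⊕ (Fin N × Fin q)) (Fin ny ⊕ (Fin N × Fin m)) ℝ)
    (Em : Matrix (Fin ny ⊕ (Fin N × Fin m)) (Fin ny ⊕ (Fin N × Fin m)) ℝ) (hEms : Em.IsSymm)
    (hFDE : ∀ (y' : Fin ny → ℝ) (xna' : Fin nna → ℝ)
        (c' : ℕ → Fin m → ℝ) (p' : ℕ → Fin q → ℝ),
      (pred ΦK G Bp (Sum.elim y' xna') c' p' N) ⬝ᵥ (Pm *ᵥ pred ΦK G Bp (Sum.elim y' xna') c' p' N) +
        (c' (N - 1)) ⬝ᵥ (Ru *ᵥ c' (N - 1))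
      = (Sum.elim xna' (fun ij => p' ij.1 ij.2) : Fin nna ⊕ (Fin N × Fin q) → ℝ) ⬝ᵥ (Fm *ᵥ (Sum.elim xna' (fun ij => p' ij.1 ij.2) : Fin nna ⊕ (Fin N × Fin q) → ℝ)) +
        2 * ((Sum.elim xna' (fun ij => p' ij.1 ij.2) : Fin nna ⊕ (Fin N × Fin q) → ℝ) ⬝ᵥ (Dm *ᵥ (Sum.elim y' (fun ij => c' ij.1 ij.2) : Fin ny ⊕ (Fin N × Fin m) → ℝ))) +
        (Sum.elim y' (fun ij => c' ij.1 ij.2) : Fin ny ⊕ (Fin N × Fin m) → ℝ) ⬝ᵥ (Em *ᵥ (Sum.elim y' (fun ij => c' ij.1 ij.2) : Fin ny ⊕ (Fin N × Fin m) → ℝ)))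
    (Zm : Fin N → Matrix (Fin nna ⊕ (Fin N × Fin q)) (Fin nna ⊕ (Fin N × Fin q)) ℝ) (hZs : ∀ i, (Zm i).IsSymm)
    (Mm : Fin N → Matrix (Fin nna ⊕ (Fin N × Fin q)) (Fin ny ⊕ (Fin N × Fin m)) ℝ)
    (Nm : Fin N → Matrix (Fin ny ⊕ (Fin N × Fin m)) (Fin ny ⊕ (Fin N × Fin m)) ℝ) (hNs : ∀ i, (Nm i).IsSymm)
    (hZMN : ∀ (i : Fin N) (y' : Fin ny → ℝ) (xna' : Fin nna → ℝ)
        (c' : ℕ → Fin m → ℝ) (p' : ℕ → Fin q → ℝ),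
      (CK *ᵥ pred ΦK G Bp (Sum.elim y' xna') c' p' (i : ℕ) + Dq *ᵥ c' i) ⬝ᵥ
          (CK *ᵥ pred ΦK G Bp (Sum.elim y' xna') c' p' (i : ℕ) + Dq *ᵥ c' i) -
        (p' i) ⬝ᵥ (p' i)
      = (Sum.elim xna' (fun ij => p' ij.1 ij.2) : Fin nna ⊕ (Fin N × Fin q) → ℝ) ⬝ᵥ ((Zm i) *ᵥ (Sum.elim xna' (fun ij => p' ij.1 ij.2) : Fin nna ⊕ (Fin N × Fin q) → ℝ)) +
        2 * ((Sum.elim xna' (fun ij => p' ij.1 ij.2) : Fin nna ⊕ (Fin N × Fin q) → ℝ) ⬝ᵥ ((Mm i) *ᵥ (Sum.elim y' (fun ij => c' ij.1 ij.2) : Fin ny ⊕ (Fin N × Fin m) → ℝ))) +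
        (Sum.elim y' (fun ij => c' ij.1 ij.2) : Fin ny ⊕ (Fin N × Fin m) → ℝ) ⬝ᵥ ((Nm i) *ᵥ (Sum.elim y' (fun ij => c' ij.1 ij.2) : Fin ny ⊕ (Fin N × Fin m) → ℝ)))
    (Sbar : Matrix (Fin nna ⊕ (Fin N × Fin q)) (Fin nna ⊕ (Fin N × Fin q)) ℝ)
    (hSbar : Sbar = Matrix.fromBlocks (-S) 0 0 0)
    (τ : Fin N → ℝ) (hτ : ∀ i, 0 ≤ τ i) (τ' : ℝ) (hτ'0 : 0 ≤ τ')
    (Θ : Matrix (Fin nna ⊕ (Fin N × Fin q)) (Fin nna ⊕ (Fin N × Fin q)) ℝ)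
    (hΘ : Θ = -Fm - (∑ i, τ i • Zm i) - τ' • Sbar) (hΘpos : Θ.PosDef)
    (L : Matrix (Fin s) (Fin ny ⊕ (Fin N × Fin m)) ℝ)
    (hL : Lᵀ * L = Em + (∑ i, τ i • Nm i) +
      (Dm + ∑ i, τ i • Mm i)ᵀ * Θ⁻¹ * (Dm + ∑ i, τ i • Mm i))
    (J : ℝ)
    (hLMI : (Matrix.fromBlocks
        (Matrix.of fun (_ : Fin 1) (_ : Fin 1) => J - τ')
        (Matrix.of fun (_ : Fin 1) (j : Fin s) => -((L *ᵥ (Sum.elim y (fun ij => c ij.1 ij.2) : Fin ny ⊕ (Fin N × Fin m) → ℝ)) j))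
        (Matrix.of fun (i : Fin s) (_ : Fin 1) => -((L *ᵥ (Sum.elim y (fun ij => c ij.1 ij.2) : Fin ny ⊕ (Fin N × Fin m) → ℝ)) i))
        (1 : Matrix (Fin s) (Fin s) ℝ)).PosSemidef) :
    ∀ (xna : Fin nna → ℝ) (p : ℕ → Fin q → ℝ),
      xna ⬝ᵥ (S *ᵥ xna) ≤ 1 →
      (∀ i : Fin N,
        (p i) ⬝ᵥ (p i) ≤
          (CK *ᵥ pred ΦK G Bp (Sum.elim y xna) c p (i : ℕ) + Dq *ᵥ c i) ⬝ᵥ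
            (CK *ᵥ pred ΦK G Bp (Sum.elim y xna) c p (i : ℕ) + Dq *ᵥ c i)) →
      (pred ΦK G Bp (Sum.elim y xna) c p N) ⬝ᵥ (Pm *ᵥ pred ΦK G Bp (Sum.elim y xna) c p N) +
        (c (N - 1)) ⬝ᵥ (Ru *ᵥ c (N - 1)) ≤ J := by
  intro xna p hx hp
  have hlmi := dotProduct_self_le_of_fromBlocks _ _ hLMI
  rw [hFDE y xna c p]
  have hnn : ∀ i, 0 ≤ τ i * _ := fun i =>
    mul_nonneg (hτ i) ((sub_nonneg.2 (hp i)).trans_eq (hZMN i y xna c p))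
  have hSw : (Sum.elim xna (fun ij => p ij.1 ij.2) : Fin nna ⊕ (Fin N × Fin q) → ℝ) ⬝ᵥ
      (Sbar *ᵥ (Sum.elim xna (fun ij => p ij.1 ij.2) : Fin nna ⊕ (Fin N × Fin q) → ℝ)) =
      -(xna ⬝ᵥ (S *ᵥ xna)) := by
    rw [hSbar, fromBlocks_mulVec, sumElim_dotProduct_sumElim]
    simp [Function.comp_def, neg_mulVec]
  generalize (Sum.elim xna (fun ij => p ij.1 ij.2) : Fin nna ⊕ (Fin N × Fin q) → ℝ) = w at *
  generalize (Sum.elim y (fun ij => c ij.1 ij.2) : Fin ny ⊕ (Fin N × Fin m) → ℝ) = z at *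
  have hsum := Finset.sum_nonneg fun i (_ : i ∈ Finset.univ) => hnn i
  have hsq := two_mul_dotProduct_sub_le hΘpos w ((Dm + ∑ i, τ i • Mm i) *ᵥ z)
  have hΘw : w ⬝ᵥ (Θ *ᵥ w) = -(w ⬝ᵥ (Fm *ᵥ w)) - ∑ i, τ i * (w ⬝ᵥ (Zm i *ᵥ w))
      + τ' * (xna ⬝ᵥ (S *ᵥ xna)) := by
    rw [hΘ, sub_mulVec, sub_mulVec, dotProduct_sub, dotProduct_sub, dotProduct_sum_smul_mulVec,
      smul_mulVec, dotProduct_smul, hSw, neg_mulVec, dotProduct_neg, smul_eq_mul]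
    ring
  have hLz : (L *ᵥ z) ⬝ᵥ (L *ᵥ z) = z ⬝ᵥ (Em *ᵥ z) + ∑ i, τ i * (z ⬝ᵥ (Nm i *ᵥ z)) +
      ((Dm + ∑ i, τ i • Mm i) *ᵥ z) ⬝ᵥ (Θ⁻¹ *ᵥ ((Dm + ∑ i, τ i • Mm i) *ᵥ z)) := by
    have h1 : (L *ᵥ z) ⬝ᵥ (L *ᵥ z) = z ⬝ᵥ ((Lᵀ * L) *ᵥ z) := by
      rw [← mulVec_mulVec, dotProduct_mulVec z, vecMul_transpose]
    rw [h1, hL, add_mulVec, add_mulVec, dotProduct_add, dotProduct_add,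
      dotProduct_sum_smul_mulVec, Matrix.mul_assoc, ← mulVec_mulVec, dotProduct_mulVec z _ᵀ,
      vecMul_transpose, ← mulVec_mulVec]
  have hDz : w ⬝ᵥ ((Dm + ∑ i, τ i • Mm i) *ᵥ z) =
      w ⬝ᵥ (Dm *ᵥ z) + ∑ i, τ i * (w ⬝ᵥ (Mm i *ᵥ z)) := by
    rw [add_mulVec, dotProduct_add, dotProduct_sum_smul_mulVec]
  have hsplit : ∑ i, τ i * (w ⬝ᵥ (Zm i *ᵥ w) + 2 * (w ⬝ᵥ (Mm i *ᵥ z)) + z ⬝ᵥ (Nm i *ᵥ z)) =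
      ∑ i, τ i * (w ⬝ᵥ (Zm i *ᵥ w)) + 2 * ∑ i, τ i * (w ⬝ᵥ (Mm i *ᵥ z)) +
        ∑ i, τ i * (z ⬝ᵥ (Nm i *ᵥ z)) := by
    rw [Finset.mul_sum, ← Finset.sum_add_distrib, ← Finset.sum_add_distrib]
    exact Finset.sum_congr rfl fun i _ => by ring
  have hτS : τ' * (xna ⬝ᵥ (S *ᵥ xna)) ≤ τ' := mul_le_of_le_one_right hτ'0 hx
  rw [hsplit] at hsum
  rw [hDz, hΘw] at hsq
  linarith
end
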